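/- arXiv:2301.07954 — 2 statements merged into one kernel-verified Lean document; each statement's English description precedes it below -/
import Mathlib

section
/- There exist constants M₃ > 0 and M₄ > 0 such that for all real numbers a, b with a > M₄ and a³ − b²/4 − b/(4a) > M₃, every global PI function with data (a, b) is of Type C, i.e., it has infinitely many poles on the negative real axis. -/
/-!
Put `v(s) = y(-s)` for `s ≥ 0`, so that `v'' = 6 v² - s`, and consider the regularised energy
`f = v'²/2 - 2v³ + s v - v'/(2v) + 1/(4v²)`. Three facts carry the proof.

* `f' = -s/(2v) + f/v² - 1/(4v⁴)` (`hasDerivAt_cEnergy`). The coefficients are analytic at the poles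
  of `v`, so `f` extends analytically through them (`order_nonneg_of_linear_ode`), and `f` decreases
  wherever `v > 0` and `f < 0`.
* Completing the square gives `2v³ - s v > -f` (`cubic_pos`). So as long as `f ≤ f(0) < 0`, the
  solution cannot reach `0`, and it comes back from `+∞`, not from `-∞`, after each pole. The
  condition on `(a, b)` makes `f(0)` negative, so `v > 0` and `2v² > s` for all `s ≥ 0` outside the
  poles (`infinite_poles`).
* A solution with `2v² > s` satisfies `v'' ≥ 4v²` and blows up in finite time
  (`no_global_solution`), so there is no last pole.

The passage from `ℂ` to `ℝ` uses that `y` is real on the real axis (`IsGlobalPI.eventuallyEq_conj`).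
The constants `M₃ = M₄ = 1` suffice.
-/

open Filter Topology

noncomputable section

/-- A point `z` is a pole of `y` if `‖y w‖ → ∞` as `w → z`, `w ≠ z`. -/
def IsPolePt (y : ℂ → ℂ) (z : ℂ) : Prop :=
  Tendsto (fun w => ‖y w‖) (𝓝[≠] z) atTop

/-- A global PI function with initial data `(a, b)`. -/
structure IsGlobalPI (y : ℂ → ℂ) (a b : ℂ) : Prop where
  mero : MeromorphicOn y Set.univ
  anal : AnalyticAt ℂ y 0
  init : y 0 = a
  slope : deriv y 0 = b
  eqn : ∀ z : ℂ, AnalyticAt ℂ y z → deriv (deriv y) z = 6 * y z ^ 2 + z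

/-- Type (A): analytic on `(-∞, 0]` and oscillating about `-√(-t/6)`. -/
def TypeA (y : ℂ → ℂ) : Prop :=
  (∀ t : ℝ, t ≤ 0 → AnalyticAt ℂ y (t : ℂ)) ∧
  Tendsto (fun t : ℝ => y (t : ℂ) + (Real.sqrt (-t / 6) : ℂ)) atBot (𝓝 0)

/-- Type (B): separatrix (tronquée) solution. -/
def TypeB (y : ℂ → ℂ) : Prop :=
  (∀ t : ℝ, t ≤ 0 → AnalyticAt ℂ y (t : ℂ)) ∧
  Tendsto (fun t : ℝ => y (t : ℂ) - (Real.sqrt (-t / 6) : ℂ)) atBot (𝓝 0)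

/-- Type (C): infinitely many poles on the negative real axis. -/
def TypeC (y : ℂ → ℂ) : Prop :=
  {t : ℝ | t < 0 ∧ IsPolePt y (t : ℂ)}.Infinite

open ComplexConjugate

/-! ### Blow-up on the real line -/

lemma growth_of_deriv_ge {f f' : ℝ → ℝ} {a c : ℝ}
    (hf : ∀ s, a ≤ s → HasDerivAt f (f' s) s) (hc : ∀ s, a ≤ s → c ≤ f' s) :
    ∀ s, a ≤ s → f a + c * (s - a) ≤ f s := by
  intro s hs
  have := (convex_Ici a).mul_sub_le_image_sub_of_le_deriv (f := f) (C := c)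
    (fun x hx => (hf x hx).continuousAt.continuousWithinAt)
    (fun x hx => (hf x (interior_subset hx)).differentiableAt.differentiableWithinAt)
    (fun x hx => by rw [(hf x (interior_subset hx)).deriv]; exact hc x (interior_subset hx))
    a (Set.mem_Ici.2 le_rfl) s hs hs
  linarith

/-- A solution of `v'' = 6 v² - s` cannot stay in the region `v ≥ 1`, `2 v² ≥ s` for all large `s`.
There `v'' ≥ 4 v²`, so eventually `v'² ≥ 2 v³`, and then `1 / √v` decreases at a rate at least `1/2`
and reaches `0` in finite time. -/
lemma no_global_solution {v p : ℝ → ℝ} {s₀ : ℝ}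
    (hv : ∀ s, s₀ ≤ s → HasDerivAt v (p s) s)
    (hp : ∀ s, s₀ ≤ s → HasDerivAt p (6 * v s ^ 2 - s) s)
    (h1 : ∀ s, s₀ ≤ s → 1 ≤ v s) (h2 : ∀ s, s₀ ≤ s → s ≤ 2 * v s ^ 2) : False := by
  have hp1 : ∃ s₁, s₀ ≤ s₁ ∧ ∀ s, s₁ ≤ s → 1 ≤ p s := by
    refine ⟨s₀ + |p s₀| + 1, by linarith [abs_nonneg (p s₀)], fun s hs => ?_⟩
    have h0 : s₀ ≤ s := by linarith [abs_nonneg (p s₀)]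
    have := growth_of_deriv_ge (c := 4) hp
      (fun s hs => by nlinarith [h1 s hs, h2 s hs]) s h0
    linarith [neg_abs_le (p s₀), abs_nonneg (p s₀)]
  obtain ⟨s₁, h01, hp1⟩ := hp1
  have hg : ∃ s₂, s₁ ≤ s₂ ∧ ∀ s, s₂ ≤ s → 0 ≤ p s ^ 2 - 2 * v s ^ 3 := by
    set g : ℝ → ℝ := fun s => p s ^ 2 - 2 * v s ^ 3 with hgdef
    have hg' : ∀ s, s₁ ≤ s →
        HasDerivAt g (2 * p s * (6 * v s ^ 2 - s) - 6 * v s ^ 2 * p s) s := by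
      intro s hs
      have hs0 := h01.trans hs
      refine (((hp s hs0).pow 2).sub (((hv s hs0).pow 3).const_mul 2)).congr_deriv ?_
      push_cast
      ring
    refine ⟨s₁ + |g s₁|, by linarith [abs_nonneg (g s₁)], fun s hs => ?_⟩
    have h0 : s₁ ≤ s := by linarith [abs_nonneg (g s₁)]
    have := growth_of_deriv_ge (c := 2) hg' (fun s hs => by
      have a1 := h1 s (h01.trans hs)
      have a2 := h2 s (h01.trans hs)
      have a3 := hp1 s hs
      have a4 : 0 ≤ p s * (2 * v s ^ 2 - s) := mul_nonneg (by linarith) (by linarith)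
      have a5 : 1 ≤ v s ^ 2 := by nlinarith
      nlinarith) s h0
    change 0 ≤ g s
    linarith [neg_abs_le (g s₁), abs_nonneg (g s₁)]
  obtain ⟨s₂, h12, hg⟩ := hg
  have hh : ∀ s, s₂ ≤ s → HasDerivAt (fun s => -(√(v s))⁻¹)
      (p s / (2 * √(v s)) / √(v s) ^ 2) s := by
    intro s hs
    have hvs := h1 s ((h01.trans h12).trans hs)
    have h3 := (hv s ((h01.trans h12).trans hs)).sqrt (by linarith)
    have h4 := (h3.inv (Real.sqrt_pos.2 (by linarith)).ne').neg
    refine h4.congr_deriv ?_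
    ring
  have hgr := growth_of_deriv_ge (c := 1 / 2) hh (fun s hs => by
    have hs0 := (h01.trans h12).trans hs
    have hvs := h1 s hs0
    have hq : 0 < √(v s) := Real.sqrt_pos.2 (by linarith)
    have hq2 : √(v s) ^ 2 = v s := Real.sq_sqrt (by linarith)
    have hpp := hp1 s (h12.trans hs)
    have hgs := hg s hs
    rw [← hq2] at hgs
    have h5 : √(v s) ^ 3 ≤ p s := by
      refine le_of_sq_le_sq ?_ (by linarith)
      have : (0:ℝ) ≤ √(v s) ^ 6 := by positivity
      nlinarith
    rw [div_div, le_div_iff₀ (by positivity)]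
    nlinarith) (s₂ + 2 * (√(v s₂))⁻¹) (by
      have : (0:ℝ) ≤ (√(v s₂))⁻¹ := by positivity
      linarith)
  have hpos : 0 < (√(v (s₂ + 2 * (√(v s₂))⁻¹)))⁻¹ := by
    have h6 : (0:ℝ) ≤ (√(v s₂))⁻¹ := by positivity
    have := h1 (s₂ + 2 * (√(v s₂))⁻¹) (by linarith)
    exact inv_pos.2 (Real.sqrt_pos.2 (by linarith))
  linarith

/-! ### The regularised energy -/

/-- The regularised energy of a solution of `v'' = 6 v² - s`, where `p = v'`. To the Hamiltonian
`p²/2 - 2v³ + s v` it adds `-p / (2v)`, which cancels the pole of the Hamiltonian at a pole of `v`,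
and `1 / (4v²)`, which makes the energy decreasing where it is negative, `v > 0` and
`s ≥ 0`. -/
def energy (v p s : ℝ) : ℝ :=
  p ^ 2 / 2 - 2 * v ^ 3 + s * v - p / (2 * v) + 1 / (4 * v ^ 2)

/-- Completing the square in `p`: where the energy is negative, `2 v³ - s v` is bounded below by its
absolute value. This barrier keeps `v` away from `0`. -/
lemma cubic_pos {v p s : ℝ} (hv : v ≠ 0) : 0 < 2 * v ^ 3 - s * v + energy v p s := by
  have : 2 * v ^ 3 - s * v + energy v p s = (p - 1 / (2 * v)) ^ 2 / 2 + 1 / (8 * v ^ 2) := by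
    unfold energy
    field_simp
    ring
  rw [this]
  have : 0 < v ^ 2 := by positivity
  positivity

/-- The real-variable core. Here `P` is the set of poles, `v` solves `v'' = 6 v² - s` off `P`, and `f`
is the continuous extension of the regularised energy through the poles. If initially `v > 0` and
`f < 0`, then `P` has infinitely many positive points. -/
lemma infinite_poles {P : Set ℝ} {v p f : ℝ → ℝ}
    (hP : ∀ s ∉ P, ∀ᶠ x in 𝓝 s, x ∉ P)
    (hv : ∀ s ∉ P, HasDerivAt v (p s) s)
    (hp : ∀ s ∉ P, HasDerivAt p (6 * v s ^ 2 - s) s)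
    (hf : ∀ s ∉ P, v s ≠ 0 → f s = energy (v s) (p s) s)
    (hf' : ∀ s ∉ P, v s ≠ 0 →
      HasDerivAt f (-s / (2 * v s) + f s / v s ^ 2 - 1 / (4 * v s ^ 4)) s)
    (hPd : ∀ s ∈ P, ∀ᶠ x in 𝓝[≠] s, x ∉ P)
    (hPv : ∀ s ∈ P, Tendsto (fun x => |v x|) (𝓝[≠] s) atTop)
    (hPf : ∀ s ∈ P, ContinuousAt f s)
    (hv0 : 0 < v 0) (hf0 : f 0 < 0) :
    (P ∩ Set.Ioi 0).Infinite := by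
  -- Continuous induction on `G`: the solution is at a pole or positive, and the energy has not
  -- grown above its initial value.
  set G : Set ℝ := {s | (s ∈ P ∨ 0 < v s) ∧ f s ≤ f 0} with hG
  have hGc : ∀ s ∈ G, ContinuousAt f s := by
    rintro s ⟨hs, -⟩
    by_cases hsP : s ∈ P
    · exact hPf s hsP
    · exact (hf' s hsP (hs.resolve_left hsP).ne').continuousAt
  have hGcub : ∀ s ∈ G, s ∉ P → 0 < v s ∧ -f 0 ≤ 2 * v s ^ 3 - s * v s := by
    rintro s ⟨hs, hfs⟩ hsP
    have hvs := hs.resolve_left hsP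
    have h1 := cubic_pos (p := p s) (s := s) hvs.ne'
    rw [← hf s hsP hvs.ne'] at h1
    exact ⟨hvs, by linarith⟩
  have hclosed : ∀ T, IsClosed (G ∩ Set.Icc 0 T) := by
    intro T
    refine isClosed_of_closure_subset fun x hx => ?_
    have hxT : x ∈ Set.Icc 0 T :=
      isClosed_Icc.closure_subset_iff.2 Set.inter_subset_right hx
    refine ⟨?_, hxT⟩
    have hfr : ∃ᶠ y in 𝓝 x, y ∈ G :=
      (mem_closure_iff_frequently.1 hx).mono fun y hy => hy.1
    have hfle : ContinuousAt f x → f x ≤ f 0 := fun hc =>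
      le_of_tendsto_of_frequently hc (hfr.mono fun y hy => hy.2)
    by_cases hxP : x ∈ P
    · exact ⟨Or.inl hxP, hfle (hPf x hxP)⟩
    · have hfr' := (hfr.and_eventually (hP x hxP)).mono fun y hy => hGcub y hy.1 hy.2
      have hvc := (hv x hxP).continuousAt
      have h1 : 0 ≤ v x := ge_of_tendsto_of_frequently hvc (hfr'.mono fun y hy => hy.1.le)
      have h2 : -f 0 ≤ 2 * v x ^ 3 - x * v x := by
        have hc : ContinuousAt (fun y => 2 * v y ^ 3 - y * v y) x := by fun_prop
        exact ge_of_tendsto_of_frequently hc (hfr'.mono fun y hy => hy.2)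
      have h3 : 0 < v x := by
        refine h1.lt_of_ne fun h => ?_
        rw [← h] at h2
        norm_num at h2
        linarith
      exact ⟨Or.inr h3, hfle (hf' x hxP h3.ne').continuousAt⟩
  have hopen : ∀ x ∈ G, 0 ≤ x → G ∈ 𝓝[>] x := by
    intro x hx hx0
    have hfneg : ∀ᶠ y in 𝓝[>] x, f y < 0 :=
      ((hGc x hx).eventually (gt_mem_nhds (hx.2.trans_lt hf0))).filter_mono nhdsWithin_le_nhds
    have hnice : ∀ᶠ y in 𝓝[>] x, y ∉ P ∧ 0 < v y := by
      by_cases hxP : x ∈ P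
      -- Just after a pole `|v|` is large; the barrier inequality excludes large negative values.
      · have hle : 𝓝[>] x ≤ 𝓝[≠] x := nhdsWithin_mono x fun y hy => ne_of_gt hy
        have hbig := ((hPv x hxP).eventually_ge_atTop (x + 2)).filter_mono hle
        have hlt : ∀ᶠ y in 𝓝[>] x, y < x + 1 :=
          (gt_mem_nhds (by linarith : x < x + 1)).filter_mono nhdsWithin_le_nhds
        filter_upwards [hfneg, (hPd x hxP).filter_mono hle, hbig, hlt] with y hy1 hy2 hy3 hy4
        refine ⟨hy2, ?_⟩
        have hvy : v y ≠ 0 := by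
          intro h
          rw [h] at hy3
          norm_num at hy3
          linarith
        have h1 := cubic_pos (p := p y) (s := y) hvy
        rw [← hf y hy2 hvy] at h1
        have h2 : y < 2 * v y ^ 2 := by
          rw [← sq_abs]
          nlinarith
        by_contra hneg
        nlinarith [mul_nonneg (sub_nonneg.2 h2.le) (neg_nonneg.2 (not_lt.1 hneg))]
      · have h1 := (hP x hxP).and
          ((hv x hxP).continuousAt.eventually (lt_mem_nhds (hx.1.resolve_left hxP)))
        exact h1.filter_mono nhdsWithin_le_nhds
    obtain ⟨u, hu, hsub⟩ := (mem_nhdsGT_iff_exists_Ioo_subset).1 (hfneg.and hnice)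
    refine mem_nhdsGT_iff_exists_Ioo_subset.2 ⟨u, hu, fun y hy => ?_⟩
    have hder : ∀ z ∈ Set.Ioo x u,
        HasDerivAt f (-z / (2 * v z) + f z / v z ^ 2 - 1 / (4 * v z ^ 4)) z :=
      fun z hz => hf' z (hsub hz).2.1 (hsub hz).2.2.ne'
    have hanti : AntitoneOn f (Set.Icc x y) := by
      refine antitoneOn_of_deriv_nonpos (convex_Icc x y) ?_ ?_ ?_
      · intro z hz
        rcases hz.1.eq_or_lt with rfl | hlt
        · exact (hGc x hx).continuousWithinAt
        · exact (hder z ⟨hlt, hz.2.trans_lt hy.2⟩).continuousAt.continuousWithinAt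
      · intro z hz
        rw [interior_Icc] at hz
        exact (hder z ⟨hz.1, hz.2.trans hy.2⟩).differentiableAt.differentiableWithinAt
      · intro z hz
        rw [interior_Icc] at hz
        have hz' : z ∈ Set.Ioo x u := ⟨hz.1, hz.2.trans hy.2⟩
        rw [(hder z hz').deriv]
        have hfz : f z < 0 := (hsub hz').1
        have hvz : 0 < v z := (hsub hz').2.2
        have hz0 : 0 ≤ z := hx0.trans hz.1.le
        have e1 : 0 ≤ z / (2 * v z) := by positivity
        have e2 : f z / v z ^ 2 ≤ 0 := div_nonpos_of_nonpos_of_nonneg hfz.le (by positivity)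
        have e3 : 0 ≤ 1 / (4 * v z ^ 4) := by positivity
        rw [neg_div]
        linarith
    exact ⟨Or.inr (hsub hy).2.2,
      (hanti ⟨le_rfl, hy.1.le⟩ ⟨hy.1.le, le_rfl⟩ hy.1.le).trans hx.2⟩
  have hall : ∀ s, 0 ≤ s → s ∈ G := fun s hs =>
    (hclosed s).Icc_subset_of_forall_mem_nhdsWithin ⟨Or.inr hv0, le_rfl⟩
      (fun x hx => hopen x hx.1 hx.2.1) ⟨hs, le_rfl⟩
  intro hfin
  obtain ⟨B, hB⟩ := hfin.bddAbove
  -- Beyond the last pole the solution would be global; `s₀ ≥ 2` turns `s ≤ 2 v²` into `v ≥ 1`.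
  set s₀ : ℝ := max (B + 1) 2 with hs₀
  have hs₀2 : 2 ≤ s₀ := le_max_right _ _
  have hnP : ∀ s, s₀ ≤ s → s ∉ P := fun s hs hsP => by
    have h1 : s ≤ B := hB ⟨hsP, by simp only [Set.mem_Ioi]; linarith⟩
    have h2 : B + 1 ≤ s₀ := le_max_left _ _
    linarith
  have hbd : ∀ s, s₀ ≤ s → 0 < v s ∧ s ≤ 2 * v s ^ 2 := by
    intro s hs
    obtain ⟨h1, h2⟩ := hGcub s (hall s (by linarith)) (hnP s hs)
    refine ⟨h1, ?_⟩
    by_contra hlt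
    nlinarith [mul_pos h1 (sub_pos.2 (not_le.1 hlt))]
  exact no_global_solution (fun s hs => hv s (hnP s hs)) (fun s hs => hp s (hnP s hs))
    (fun s hs => by nlinarith [hbd s hs]) (fun s hs => (hbd s hs).2)

/-! ### Meromorphic solutions and reality -/

/-- A meromorphic solution of the linear equation `F' = α F + β` with `α`, `β` analytic has no pole:
differentiation lowers a negative order by one, which the right-hand side cannot match. -/
lemma order_nonneg_of_linear_ode {F α β : ℂ → ℂ} {z : ℂ} (hF : MeromorphicAt F z)
    (hα : AnalyticAt ℂ α z) (hβ : AnalyticAt ℂ β z)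
    (h : deriv F =ᶠ[𝓝[≠] z] α * F + β) : 0 ≤ meromorphicOrderAt F z := by
  by_contra hneg
  rw [not_le] at hneg
  obtain ⟨n, hn⟩ := WithTop.ne_top_iff_exists.1 hneg.ne_top
  rw [← hn] at hneg
  have hn0 : n < 0 := by exact_mod_cast hneg
  have h1 := meromorphicOrderAt_deriv_eq_sub_one (n := n) (by exact_mod_cast hn0.ne) hn.symm
  rw [meromorphicOrderAt_congr h] at h1
  have h2 := meromorphicOrderAt_add (hα.meromorphicAt.mul hF) hβ.meromorphicAt
  rw [h1, meromorphicOrderAt_mul hα.meromorphicAt hF, ← hn] at h2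
  have h3 : (n : WithTop ℤ) ≤ meromorphicOrderAt α z + n := by
    simpa using add_le_add_left hα.meromorphicOrderAt_nonneg (n : WithTop ℤ)
  have h4 : (n : WithTop ℤ) ≤ ((n - 1 : ℤ) : WithTop ℤ) :=
    (le_min h3 (hneg.le.trans hβ.meromorphicOrderAt_nonneg)).trans h2
  have h5 : n ≤ n - 1 := by exact_mod_cast h4
  omega

/-- Uniqueness for `D'' = k D` with zero initial data: a finite order of vanishing would drop by two
on the left and would not drop on the right. -/
lemma eventually_zero_of_linear_ode {D k : ℂ → ℂ} {z : ℂ} (hD : AnalyticAt ℂ D z)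
    (hk : AnalyticAt ℂ k z) (h0 : D z = 0) (h1 : deriv D z = 0)
    (h : deriv (deriv D) =ᶠ[𝓝 z] k * D) : ∀ᶠ w in 𝓝 z, D w = 0 := by
  rw [← analyticOrderAt_eq_top]
  by_contra hne
  have e1 := hD.analyticOrderAt_deriv_add_one
  have e2 := hD.deriv.analyticOrderAt_deriv_add_one
  simp only [h0, h1, sub_zero] at e1 e2
  rw [analyticOrderAt_congr h, analyticOrderAt_mul hk hD] at e2
  obtain ⟨n, hn⟩ := ENat.ne_top_iff_exists.1 hne
  have e3 : analyticOrderAt D z + 1 + 1 ≤ analyticOrderAt D z := by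
    calc analyticOrderAt D z + 1 + 1
        ≤ analyticOrderAt k z + analyticOrderAt D z + 1 + 1 := by gcongr; exact le_add_self
      _ = analyticOrderAt D z := by rw [e2, e1]
  change analyticOrderAt D z + 1 + 1 ≤ analyticOrderAt D z at e3
  rw [← hn] at e3
  have : n + 1 + 1 ≤ n := by exact_mod_cast e3
  omega

lemma analyticAt_conj_conj {f : ℂ → ℂ} {z : ℂ} (hf : AnalyticAt ℂ f (conj z)) :
    AnalyticAt ℂ (conj ∘ f ∘ conj) z := by
  rw [Complex.analyticAt_iff_eventually_differentiableAt] at hf ⊢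
  filter_upwards [(Complex.continuous_conj.tendsto z).eventually hf] with w hw
  simpa using hw.conj_conj

lemma meromorphicAt_conj_conj {f : ℂ → ℂ} {z : ℂ} (hf : MeromorphicAt f (conj z)) :
    MeromorphicAt (conj ∘ f ∘ conj) z := by
  obtain ⟨n, hn⟩ := hf
  refine ⟨n, ?_⟩
  have h : (fun w => (w - z) ^ n • (conj ∘ f ∘ conj) w) =
      conj ∘ (fun w => (w - conj z) ^ n • f w) ∘ conj := by
    funext w
    simp
  rw [h]
  exact analyticAt_conj_conj hn

/-- Removing the removable singularities of a global PI function changes neither the initial data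
nor the poles, and gives a function that is analytic at every point that is not a pole. -/
lemma IsGlobalPI.exists_normalForm {y : ℂ → ℂ} {a b : ℂ} (hy : IsGlobalPI y a b) :
    ∃ Y, IsGlobalPI Y a b ∧ (∀ z, MeromorphicNFAt Y z) ∧
      ∀ z, IsPolePt Y z ↔ IsPolePt y z := by
  set Y := toMeromorphicNFOn y Set.univ with hY
  have hne : ∀ z, Y =ᶠ[𝓝[≠] z] y := fun z =>
    hy.mero.toMeromorphicNFOn_eq_self_on_nhdsNE (Set.mem_univ z)
  have hNF : ∀ z, MeromorphicNFAt Y z := fun z =>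
    meromorphicNFOn_toMeromorphicNFOn y Set.univ (Set.mem_univ z)
  have heq : ∀ z, AnalyticAt ℂ y z → Y =ᶠ[𝓝 z] y := fun z hz =>
    ((hNF z).eventuallyEq_nhdsNE_iff_eventuallyEq_nhds hz.meromorphicNFAt).1 (hne z)
  refine ⟨Y, ⟨fun z _ => (hNF z).meromorphicAt, ?_, ?_, ?_, ?_⟩, hNF, fun z => ?_⟩
  · exact hy.anal.congr (heq 0 hy.anal).symm
  · rw [(heq 0 hy.anal).eq_of_nhds, hy.init]
  · rw [(heq 0 hy.anal).deriv_eq, hy.slope]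
  · intro z hz
    have hev : deriv (deriv Y) =ᶠ[𝓝[≠] z] fun w => 6 * Y w ^ 2 + w := by
      filter_upwards [(hy.mero z (Set.mem_univ z)).eventually_analyticAt] with w hw
      rw [(heq w hw).deriv.deriv_eq, hy.eqn w hw, (heq w hw).eq_of_nhds]
    have hc1 : ContinuousAt (deriv (deriv Y)) z := hz.deriv.deriv.continuousAt
    have hc2 : ContinuousAt (fun w => 6 * Y w ^ 2 + w) z := by
      have := hz.continuousAt
      fun_prop
    exact ((hc1.eventuallyEq_nhds_iff_eventuallyEq_nhdsNE hc2).1 hev).eq_of_nhds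
  · exact tendsto_congr' ((hne z).fun_comp norm)

lemma analyticAt_or_isPolePt {Y : ℂ → ℂ} {z : ℂ} (h : MeromorphicNFAt Y z) :
    AnalyticAt ℂ Y z ∨ (IsPolePt Y z ∧ meromorphicOrderAt Y z < 0) := by
  rcases meromorphicNFAt_iff_analyticAt_or.1 h with h | ⟨-, h, -⟩
  · exact Or.inl h
  · exact Or.inr ⟨tendsto_norm_cobounded_atTop.comp
      (tendsto_cobounded_of_meromorphicOrderAt_neg h), h⟩

lemma IsPolePt.not_analyticAt {Y : ℂ → ℂ} {z : ℂ} (h : IsPolePt Y z) : ¬ AnalyticAt ℂ Y z :=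
  fun ha => not_tendsto_atTop_of_tendsto_nhds
    (ha.continuousAt.norm.tendsto.mono_left nhdsWithin_le_nhds) h

/-- Schwarz reflection: a global PI function with real data equals `conj ∘ Y ∘ conj`, by uniqueness
near `0` and the identity theorem for meromorphic functions on `ℂ`. -/
lemma IsGlobalPI.eventuallyEq_conj {Y : ℂ → ℂ} {a b : ℝ} (hY : IsGlobalPI Y a b)
    {x : ℝ} (hx : AnalyticAt ℂ Y x) : Y =ᶠ[𝓝 (x : ℂ)] conj ∘ Y ∘ conj := by
  set D : ℂ → ℂ := Y - conj ∘ Y ∘ conj with hD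
  have hconjx : ∀ x : ℝ, AnalyticAt ℂ Y x → AnalyticAt ℂ (conj ∘ Y ∘ conj) (x : ℂ) :=
    fun x hx => analyticAt_conj_conj (by rwa [Complex.conj_ofReal])
  have hDa : ∀ x : ℝ, AnalyticAt ℂ Y x → AnalyticAt ℂ D x :=
    fun x hx => hx.sub (hconjx x hx)
  have hmero : MeromorphicOn D Set.univ := fun z _ =>
    (hY.mero z (Set.mem_univ z)).sub (meromorphicAt_conj_conj (hY.mero _ (Set.mem_univ _)))
  have h0a : AnalyticAt ℂ Y ((0 : ℝ) : ℂ) := by simpa using hY.anal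
  have hzero : ∀ᶠ w in 𝓝 ((0 : ℝ) : ℂ), D w = 0 := by
    have hsum : AnalyticAt ℂ (fun w => 6 * (Y w + (conj ∘ Y ∘ conj) w)) ((0 : ℝ) : ℂ) :=
      analyticAt_const.mul (h0a.add (hconjx 0 h0a))
    refine eventually_zero_of_linear_ode (hDa 0 h0a) hsum ?_ ?_ ?_
    · simp [hD, hY.init]
    · rw [hD, deriv_sub h0a.differentiableAt (hconjx 0 h0a).differentiableAt, deriv_conj_conj]
      simp [hY.slope]
    · have hev := h0a.eventually_analyticAt
      have hev' : ∀ᶠ w in 𝓝 ((0 : ℝ) : ℂ), AnalyticAt ℂ Y (conj w) := by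
        have ht := Complex.continuous_conj.tendsto ((0 : ℝ) : ℂ)
        rw [Complex.conj_ofReal] at ht
        exact ht.eventually hev
      have hd1 : deriv D =ᶠ[𝓝 ((0 : ℝ) : ℂ)] deriv Y - conj ∘ deriv Y ∘ conj := by
        filter_upwards [hev, hev'] with w hw hw'
        rw [hD, deriv_sub hw.differentiableAt (analyticAt_conj_conj hw').differentiableAt,
          deriv_conj_conj]
        simp
      filter_upwards [hd1.deriv, hev, hev'] with w hdw hw hw'
      rw [hdw, deriv_sub hw.deriv.differentiableAt
        (analyticAt_conj_conj hw'.deriv).differentiableAt, deriv_conj_conj, hY.eqn w hw,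
        Function.comp_apply, Function.comp_apply, hY.eqn _ hw']
      have h6 : conj (6 : ℂ) = 6 := Complex.conj_ofNat 6
      simp [hD, h6]
      ring
  have htop0 : meromorphicOrderAt D ((0 : ℝ) : ℂ) = ⊤ :=
    meromorphicOrderAt_eq_top_iff.2 (hzero.filter_mono nhdsWithin_le_nhds)
  have htop : meromorphicOrderAt D (x : ℂ) = ⊤ := by
    by_contra hne
    exact hmero.meromorphicOrderAt_ne_top_of_isPreconnected isPreconnected_univ
      (Set.mem_univ _) (Set.mem_univ _) hne htop0
  have hz : D =ᶠ[𝓝 (x : ℂ)] fun _ => 0 :=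
    ((hDa x hx).continuousAt.eventuallyEq_nhds_iff_eventuallyEq_nhdsNE
      continuousAt_const).1 (meromorphicOrderAt_eq_top_iff.1 htop)
  filter_upwards [hz] with w hw
  exact sub_eq_zero.1 hw

lemma IsGlobalPI.ofReal_re {Y : ℂ → ℂ} {a b : ℝ} (hY : IsGlobalPI Y a b)
    {x : ℝ} (hx : AnalyticAt ℂ Y x) :
    (((Y x).re : ℝ) : ℂ) = Y x ∧ (((deriv Y x).re : ℝ) : ℂ) = deriv Y x := by
  have h := hY.eventuallyEq_conj hx
  constructor
  · have h1 := h.eq_of_nhds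
    simp only [Function.comp_apply, Complex.conj_ofReal] at h1
    exact Complex.conj_eq_iff_re.1 h1.symm
  · have h1 := h.deriv_eq
    rw [deriv_conj_conj] at h1
    simp only [Function.comp_apply, Complex.conj_ofReal] at h1
    exact Complex.conj_eq_iff_re.1 h1.symm

/-! ### The energy along a meromorphic solution -/

/-- The regularised energy along `Y` as a function of the complex variable `z`. It is the complex
form of `energy`, with `s = -z` and `p = -Y'`. -/
def cEnergy (Y : ℂ → ℂ) (z : ℂ) : ℂ :=
  deriv Y z ^ 2 / 2 - 2 * Y z ^ 3 - z * Y z + deriv Y z / (2 * Y z) + 1 / (4 * Y z ^ 2)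

lemma meromorphicOn_cEnergy {Y : ℂ → ℂ} (hY : MeromorphicOn Y Set.univ) :
    MeromorphicOn (cEnergy Y) Set.univ := by
  intro z hz
  have h := hY z hz
  have h' := h.deriv
  unfold cEnergy
  fun_prop

lemma analyticAt_cEnergy {Y : ℂ → ℂ} {z : ℂ} (hY : AnalyticAt ℂ Y z) (h0 : Y z ≠ 0) :
    AnalyticAt ℂ (cEnergy Y) z := by
  have h' := hY.deriv
  unfold cEnergy
  fun_prop (disch := simpa using h0)

/-- The regularised energy solves a linear equation whose coefficients are polynomials in `z` and
`1 / Y`, hence stay analytic at the poles of `Y`. -/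
lemma hasDerivAt_cEnergy {Y : ℂ → ℂ} {a b z : ℂ} (hY : IsGlobalPI Y a b)
    (hz : AnalyticAt ℂ Y z) (h0 : Y z ≠ 0) :
    HasDerivAt (cEnergy Y)
      (-(Y z)⁻¹ ^ 2 * cEnergy Y z + (-z * (Y z)⁻¹ / 2 + (Y z)⁻¹ ^ 4 / 4)) z := by
  have h1 := hz.differentiableAt.hasDerivAt
  have h2 := hz.deriv.differentiableAt.hasDerivAt
  rw [hY.eqn z hz] at h2
  have h3 := (((((h2.pow 2).div_const 2).sub ((h1.pow 3).const_mul 2)).sub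
    ((hasDerivAt_id z).mul h1)).add (h2.div (h1.const_mul 2) (by simpa using h0))).add
    ((hasDerivAt_const z (1 : ℂ)).div ((h1.pow 2).const_mul 4) (by simpa using h0))
  refine h3.congr_deriv ?_
  simp only [cEnergy, id, Pi.pow_apply]
  field_simp
  push_cast
  ring

lemma HasDerivAt.re_comp_neg {g : ℂ → ℂ} {g' : ℂ} {s : ℝ} (h : HasDerivAt g g' (-(s : ℂ))) :
    HasDerivAt (fun x : ℝ => (g (-(x : ℂ))).re) (-g'.re) s := by
  have h1 : HasDerivAt (fun z : ℂ => g (-z)) (-g') (s : ℂ) := by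
    have h2 := HasDerivAt.comp (s : ℂ) h (hasDerivAt_neg (s : ℂ))
    rwa [mul_neg_one] at h2
  simpa using h1.real_of_complex

lemma tendsto_neg_ofReal_nhdsNE (s : ℝ) :
    Tendsto (fun x : ℝ => -(x : ℂ)) (𝓝[≠] s) (𝓝[≠] (-(s : ℂ))) := by
  refine tendsto_nhdsWithin_iff.2 ⟨?_, ?_⟩
  · exact ((Complex.continuous_ofReal.neg).tendsto s).mono_left nhdsWithin_le_nhds
  · filter_upwards [self_mem_nhdsWithin] with x hx
    simpa using hx

theorem stmt1 :
    ∃ M₃ > (0 : ℝ), ∃ M₄ > (0 : ℝ), ∀ a b : ℝ, M₄ < a →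
      M₃ < a ^ 3 - b ^ 2 / 4 - b / (4 * a) →
      ∀ y : ℂ → ℂ, IsGlobalPI y (a : ℂ) (b : ℂ) → TypeC y := by
  refine ⟨1, one_pos, 1, one_pos, fun a b ha hab y hy => ?_⟩
  obtain ⟨Y, hY, hNF, hpole⟩ := hy.exists_normalForm
  set F := toMeromorphicNFOn (cEnergy Y) Set.univ with hF
  set P : Set ℝ := {s | IsPolePt Y (-(s : ℂ))} with hPdef
  set v : ℝ → ℝ := fun s => (Y (-(s : ℂ))).re with hvdef
  set p : ℝ → ℝ := fun s => -(deriv Y (-(s : ℂ))).re with hpdef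
  set f : ℝ → ℝ := fun s => (F (-(s : ℂ))).re with hfdef
  have han : ∀ s, s ∉ P → AnalyticAt ℂ Y (-(s : ℂ)) := fun s hs =>
    (analyticAt_or_isPolePt (hNF _)).resolve_right fun h => hs h.1
  have hreal : ∀ s, s ∉ P → ((v s : ℝ) : ℂ) = Y (-(s : ℂ)) ∧
      ((-p s : ℝ) : ℂ) = deriv Y (-(s : ℂ)) := by
    intro s hs
    have h := hY.ofReal_re (x := -s) (by simpa using han s hs)
    simpa [hvdef, hpdef] using h
  have hne : ∀ s, s ∉ P → v s ≠ 0 → Y (-(s : ℂ)) ≠ 0 := by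
    intro s hs hv h
    exact hv (by simp [hvdef, h])
  have hFE : ∀ z, AnalyticAt ℂ Y z → Y z ≠ 0 → F =ᶠ[𝓝 z] cEnergy Y := by
    intro z hz h0
    have h1 := toMeromorphicNFOn_eq_toMeromorphicNFAt_on_nhds (meromorphicOn_cEnergy hY.mero)
      (Set.mem_univ z)
    rwa [toMeromorphicNFAt_eq_self.2 (analyticAt_cEnergy hz h0).meromorphicNFAt] at h1
  have hEs : ∀ s, s ∉ P → cEnergy Y (-(s : ℂ)) = ((energy (v s) (p s) s : ℝ) : ℂ) := by
    intro s hs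
    obtain ⟨h1, h2⟩ := hreal s hs
    simp only [cEnergy, energy, ← h1, ← h2]
    push_cast
    ring
  have hfE : ∀ s ∉ P, v s ≠ 0 → f s = energy (v s) (p s) s := by
    intro s hs h0
    simp only [hfdef]
    rw [(hFE _ (han s hs) (hne s hs h0)).eq_of_nhds, hEs s hs, Complex.ofReal_re]
  have h0P : (0 : ℝ) ∉ P := fun h => h.not_analyticAt (by simpa using hY.anal)
  have hv0 : v 0 = a := by simp [hvdef, hY.init]
  have hp0 : p 0 = -b := by simp [hpdef, hY.slope]
  have hinf : (P ∩ Set.Ioi 0).Infinite := by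
    refine infinite_poles (v := v) (p := p) (f := f) ?_ ?_ ?_ hfE ?_ ?_ ?_ ?_ ?_ ?_
    · intro s hs
      have ht : Tendsto (fun x : ℝ => -(x : ℂ)) (𝓝 s) (𝓝 (-(s : ℂ))) :=
        (Complex.continuous_ofReal.neg).tendsto s
      filter_upwards [ht.eventually (han s hs).eventually_analyticAt] with x hx hxP
      exact hxP.not_analyticAt hx
    · intro s hs
      exact (han s hs).differentiableAt.hasDerivAt.re_comp_neg
    · intro s hs
      have h := (han s hs).deriv.differentiableAt.hasDerivAt.re_comp_neg.neg
      refine h.congr_deriv ?_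
      rw [hY.eqn _ (han s hs), ← (hreal s hs).1, neg_neg]
      norm_cast
    · intro s hs h0
      have h0' := hne s hs h0
      have h := ((hasDerivAt_cEnergy hY (han s hs) h0').congr_of_eventuallyEq
        (hFE _ (han s hs) h0')).re_comp_neg
      refine h.congr_deriv ?_
      rw [hEs s hs, ← (hreal s hs).1, hfE s hs h0]
      norm_cast
      field_simp
      ring
    · intro s hs
      filter_upwards [(tendsto_neg_ofReal_nhdsNE s).eventually
        (hNF (-(s : ℂ))).meromorphicAt.eventually_analyticAt] with x hx hxP
      exact hxP.not_analyticAt hx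
    · intro s hs
      refine (Tendsto.comp hs (tendsto_neg_ofReal_nhdsNE s)).congr' ?_
      filter_upwards [(tendsto_neg_ofReal_nhdsNE s).eventually
        (hNF (-(s : ℂ))).meromorphicAt.eventually_analyticAt] with x hx
      have hxP : x ∉ P := fun h => h.not_analyticAt hx
      simp only [Function.comp_apply]
      rw [← (hreal x hxP).1, Complex.norm_real, Real.norm_eq_abs]
    · intro s hs
      have hord : meromorphicOrderAt Y (-(s : ℂ)) < 0 :=
        ((analyticAt_or_isPolePt (hNF _)).resolve_left (IsPolePt.not_analyticAt hs)).2
      have hinv : AnalyticAt ℂ Y⁻¹ (-(s : ℂ)) := by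
        rw [← (hNF _).inv.meromorphicOrderAt_nonneg_iff_analyticAt, meromorphicOrderAt_inv]
        obtain ⟨n, hn⟩ := WithTop.ne_top_iff_exists.1 hord.ne_top
        rw [← hn] at hord ⊢
        have : n < 0 := by exact_mod_cast hord
        have h2 : (0 : ℤ) ≤ -n := by omega
        exact_mod_cast h2
      have hnn : 0 ≤ meromorphicOrderAt (cEnergy Y) (-(s : ℂ)) := by
        refine order_nonneg_of_linear_ode (α := fun z => -(Y⁻¹ z) ^ 2)
          (β := fun z => -z * Y⁻¹ z / 2 + Y⁻¹ z ^ 4 / 4)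
          (meromorphicOn_cEnergy hY.mero _ (Set.mem_univ _)) (by fun_prop) (by fun_prop) ?_
        filter_upwards [(hNF (-(s : ℂ))).meromorphicAt.eventually_analyticAt,
          Tendsto.eventually_gt_atTop hs 0] with z hz hz0
        rw [(hasDerivAt_cEnergy hY hz (norm_pos_iff.1 hz0)).deriv]
        simp
      have hFa : AnalyticAt ℂ F (-(s : ℂ)) := by
        rw [← (meromorphicNFOn_toMeromorphicNFOn (cEnergy Y) Set.univ
          (Set.mem_univ (-(s : ℂ)))).meromorphicOrderAt_nonneg_iff_analyticAt,
          meromorphicOrderAt_toMeromorphicNFOn (meromorphicOn_cEnergy hY.mero) (Set.mem_univ _)]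
        exact hnn
      exact hFa.differentiableAt.hasDerivAt.re_comp_neg.continuousAt
    · rw [hv0]
      linarith
    · rw [hfE 0 h0P (by rw [hv0]; linarith), hv0, hp0, energy]
      have h1 : 1 / (4 * a ^ 2) < 1 := by
        rw [div_lt_one (by positivity)]
        nlinarith
      have h2 : -b / (2 * a) = -2 * (b / (4 * a)) := by
        field_simp
        ring
      rw [h2]
      linarith
  refine (hinf.image neg_injective.injOn).mono ?_
  rintro _ ⟨s, ⟨hs, hs0⟩, rfl⟩
  refine ⟨neg_lt_zero.2 hs0, ?_⟩
  rw [← hpole, Complex.ofReal_neg]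
  exact hs

end
end

section
/- There exists a constant M₅ > 0 such that for every real a > M₅, every global PI function with data (a, −2·a^{3/2}) is of Type C, i.e., it has infinitely many poles on the negative real axis. -/
/-! Put `u(x) = y(-x)` and `v = u'`, so that `u'' = 6u² - x` for `x ≥ 0`, with `u(0) = a` and
`v(0) = 2a^{3/2}`. The proof rests on the corrected energy
`G = v²/2 - 2u³ + xu - v/(2u) + 1/(4u²)`, which satisfies
`G' = G/u² - x/(2u) - 1/(4u⁴)`. Hence `G` decreases as long as `G < 0` and `u > 0`, and completing
the square gives `G = (v - 1/(2u))²/2 + 1/(8u²) - 2u³ + xu`, so that `G < 0` and `u > 0` force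
`u⁵ > 1/16` and `2u² > x`. The region `G < 0`, `u > 0` is therefore invariant between poles
(`RealPI.invariant`). Near a pole, `1/u` tends to `0`, so `G` is a meromorphic solution of a
linear equation with bounded coefficients and has no pole itself (`RealPI.energyG_order`); the
invariant region is thus re-entered beyond each pole (`RealPI.cross`). Inside the region
`u'' ≥ 4u²`, which makes `u` blow up in finite time (`RealPI.exists_pole`). Consequently a solution
that starts in the region has infinitely many poles. At `x = 0` one has
`G = -a^{1/2} + 1/(4a²)`, which is negative for `a > 1`.

The solution is real on the real axis because its imaginary part satisfies a linear second-order
equation with zero initial data, and meromorphic continuation carries this across the poles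
(`NFPI.im_eventually_zero`). -/


open Filter Topology

noncomputable section

/-! ### The corrected energy of a real solution -/

/-- The corrected energy `v²/2 - 2u³ + xu - v/(2u) + 1/(4u²)` of a solution `u` with derivative `v`
of `u'' = 6u² - x`. The first three terms are the Hamiltonian, the fourth cancels its singularity at
the poles of `u`, and the last one makes the derivative of the sum negative wherever the sum itself
is negative and `u > 0`, `x ≥ 0`. -/
def energyG (u v : ℝ → ℝ) (x : ℝ) : ℝ :=
  v x ^ 2 / 2 - 2 * u x ^ 3 + x * u x - v x / (2 * u x) + 1 / (4 * u x ^ 2)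

/-- `u` is a real solution of `u'' = 6u² - x` with derivative `v`, meromorphic on the real line,
and `P` is its set of poles. -/
structure RealPI (u v : ℝ → ℝ) (P : Set ℝ) : Prop where
  du : ∀ x ∉ P, HasDerivAt u (v x) x
  dv : ∀ x ∉ P, HasDerivAt v (6 * u x ^ 2 - x) x
  mu : ∀ x, MeromorphicAt u x
  mv : ∀ x, MeromorphicAt v x
  discrete : ∀ p, ∀ᶠ x in 𝓝[≠] p, x ∉ P
  pole : ∀ p ∈ P, Tendsto (fun x => |u x|) (𝓝[≠] p) atTop

variable {u v : ℝ → ℝ} {P : Set ℝ}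

theorem RealPI.hasDerivAt_energyG (h : RealPI u v P) {x : ℝ} (hx : x ∉ P) (hu : u x ≠ 0) :
    HasDerivAt (energyG u v)
      (energyG u v x / u x ^ 2 - (x / (2 * u x) + 1 / (4 * u x ^ 4))) x := by
  have hU := h.du x hx
  have hV := h.dv x hx
  have h1 := ((hV.pow 2).div_const 2).sub ((hU.pow 3).const_mul 2)
  have h2 := h1.add ((hasDerivAt_id x).mul hU)
  have h3 := h2.sub (hV.div (hU.const_mul 2) (by simpa using hu))
  have h4 := h3.add ((hasDerivAt_const x (1 : ℝ)).div ((hU.pow 2).const_mul 4) (by simpa using hu))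
  convert! h4 using 1
  simp only [energyG, id, Pi.pow_apply]
  field_simp
  ring

/-- Completing the square in `v` shows that negative corrected energy excludes small positive `u`. -/
theorem energyG_eq {x : ℝ} (hu : u x ≠ 0) : energyG u v x =
    (v x - 1 / (2 * u x)) ^ 2 / 2 + 1 / (8 * u x ^ 2) - 2 * u x ^ 3 + x * u x := by
  unfold energyG; field_simp; ring

theorem energyG_neg_bound {x : ℝ} (hu : 0 < u x) (hG : energyG u v x < 0) :
    1 / 8 < 2 * u x ^ 5 - x * u x ^ 3 := by
  have h1 := energyG_eq (v := v) hu.ne'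
  have h2 : 1 / (8 * u x ^ 2) < 2 * u x ^ 3 - x * u x := by
    nlinarith [sq_nonneg (v x - 1 / (2 * u x))]
  rw [div_lt_iff₀ (by positivity)] at h2
  nlinarith

theorem energyG_pow_bound {x : ℝ} (hx : 0 ≤ x) (hu : 0 < u x) (hG : energyG u v x < 0) :
    1 / 16 < u x ^ 5 := by
  have := energyG_neg_bound hu hG
  have : 0 ≤ x * u x ^ 3 := by positivity
  linarith

theorem energyG_lt_bound {x : ℝ} (hu : 0 < u x) (hG : energyG u v x < 0) :
    x < 2 * u x ^ 2 := by
  have h1 := energyG_neg_bound hu hG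
  have h3 : 0 < u x ^ 3 := by positivity
  by_contra hlt
  push Not at hlt
  nlinarith [mul_le_mul_of_nonneg_right hlt h3.le]

/-- On a pole-free interval in `x ≥ 0`, positivity of `u` and negativity of the corrected energy
propagate to the right, and the energy never exceeds its initial value. This is a continuous
induction: the energy is strictly decreasing as long as it is negative, and then `u⁵ > 1/16` keeps
`u` away from `0`. -/
theorem RealPI.invariant (h : RealPI u v P) {c q : ℝ} (hc : 0 ≤ c)
    (hP : ∀ x ∈ Set.Icc c q, x ∉ P) (hu : 0 < u c) (hG : energyG u v c < 0) :
    ∀ x ∈ Set.Icc c q, 0 < u x ∧ energyG u v x ≤ energyG u v c := by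
  set s : Set ℝ := {x | 1 / 16 ≤ u x ^ 5 ∧ energyG u v x ≤ energyG u v c} with hs
  have hpos : ∀ x, 1 / 16 ≤ u x ^ 5 → 0 < u x := fun x hx =>
    (Odd.pow_pos_iff (n := 5) (by decide)).1 (by linarith)
  have huc : ContinuousOn u (Set.Icc c q) := fun x hx =>
    (h.du x (hP x hx)).continuousAt.continuousWithinAt
  have hcl : IsClosed (s ∩ Set.Icc c q) := by
    have h1 : IsClosed (Set.Icc c q ∩ (fun x => u x ^ 5) ⁻¹' Set.Ici (1 / 16)) :=
      (huc.pow 5).preimage_isClosed_of_isClosed isClosed_Icc isClosed_Ici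
    have h2 : ContinuousOn (energyG u v) (Set.Icc c q ∩ (fun x => u x ^ 5) ⁻¹' Set.Ici (1 / 16)) :=
      fun x hx => (h.hasDerivAt_energyG (hP x hx.1)
        (hpos x hx.2).ne').continuousAt.continuousWithinAt
    have h3 := h2.preimage_isClosed_of_isClosed h1 (isClosed_Iic (a := energyG u v c))
    convert h3 using 1
    ext x
    simp only [hs, Set.mem_inter_iff, Set.mem_ofPred_eq, Set.mem_preimage, Set.mem_Ici, Set.mem_Iic]
    tauto
  have hsub : Set.Icc c q ⊆ s := by
    refine hcl.Icc_subset_of_forall_mem_nhdsWithin ⟨(energyG_pow_bound hc hu hG).le, le_rfl⟩ ?_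
    rintro x ⟨⟨hx5, hxG⟩, hx⟩
    have hux := hpos x hx5
    have hx0 : 0 ≤ x := hc.trans hx.1
    have hD := h.hasDerivAt_energyG (hP x ⟨hx.1, hx.2.le⟩) hux.ne'
    have hneg : energyG u v x / u x ^ 2 - (x / (2 * u x) + 1 / (4 * u x ^ 4)) < 0 := by
      have h1 : energyG u v x / u x ^ 2 < 0 := div_neg_of_neg_of_pos (by linarith) (by positivity)
      have h2 : 0 ≤ x / (2 * u x) + 1 / (4 * u x ^ 4) := by positivity
      linarith
    have e1 : ∀ᶠ y in 𝓝[>] x, 0 < u y :=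
      ((h.du x (hP x ⟨hx.1, hx.2.le⟩)).continuousAt.eventually (lt_mem_nhds hux)).filter_mono
        nhdsWithin_le_nhds
    have e2 : ∀ᶠ y in 𝓝[>] x, slope (energyG u v) x y < 0 :=
      ((hasDerivAt_iff_tendsto_slope.1 hD).eventually (gt_mem_nhds hneg)).filter_mono
        (nhdsWithin_mono _ fun y (hy : x < y) => hy.ne')
    filter_upwards [e1, e2, self_mem_nhdsWithin] with y hy1 hy2 (hy3 : x < y)
    have hlt : energyG u v y < energyG u v x := by
      rw [slope_def_field, div_neg_iff] at hy2
      rcases hy2 with hy2 | hy2 <;> linarith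
    exact ⟨(energyG_pow_bound (hx0.trans hy3.le) hy1 (by linarith)).le, by linarith⟩
  exact fun x hx => ⟨hpos x (hsub hx).1, (hsub hx).2⟩

/-- The corrected energy has no pole at a pole `p` of `u`. It solves the linear equation
`G' = G u⁻² + k` with `u⁻²` vanishing and `k` bounded near `p`; if `G` had negative order `n`, the
left side would have order `n - 1` and the right side order at least `n`. -/
theorem RealPI.energyG_order (h : RealPI u v P) {p : ℝ} (hp : p ∈ P) :
    MeromorphicAt (energyG u v) p ∧ 0 ≤ meromorphicOrderAt (energyG u v) p := by
  have hu := h.mu p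
  have hv := h.mv p
  have hid : MeromorphicAt (fun x : ℝ => x) p := MeromorphicAt.id p
  have hGm : MeromorphicAt (energyG u v) p := by unfold energyG; fun_prop
  refine ⟨hGm, ?_⟩
  have hcob : Tendsto u (𝓝[≠] p) (Bornology.cobounded ℝ) :=
    tendsto_norm_atTop_iff_cobounded.1 (h.pole p hp)
  have hinv : Tendsto u⁻¹ (𝓝[≠] p) (𝓝 0) := tendsto_inv₀_cobounded.comp hcob
  have hx : Tendsto (fun x : ℝ => x) (𝓝[≠] p) (𝓝 p) := tendsto_id.mono_left nhdsWithin_le_nhds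
  set k : ℝ → ℝ := fun x => -(x / 2 * (u⁻¹) x + 1 / 4 * (u⁻¹) x ^ 4) with hk
  have hkm : MeromorphicAt k p := by
    have := hu.inv
    simp only [hk]; fun_prop
  have hk0 : 0 ≤ meromorphicOrderAt k p :=
    (tendsto_nhds_iff_meromorphicOrderAt_nonneg hkm).1
      ⟨_, (((hx.div_const 2).mul hinv).add ((hinv.pow 4).const_mul (1 / 4))).neg⟩
  have hw0 : 0 < meromorphicOrderAt (u⁻¹ ^ 2) p :=
    (tendsto_zero_iff_meromorphicOrderAt_pos (hu.inv.pow 2)).1 (by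
      have := hinv.pow 2
      rwa [zero_pow two_ne_zero] at this)
  have hev : deriv (energyG u v) =ᶠ[𝓝[≠] p] energyG u v * u⁻¹ ^ 2 + k := by
    filter_upwards [h.discrete p, hcob.eventually_ne_cobounded 0] with x hxP hx0
    rw [(h.hasDerivAt_energyG hxP hx0).deriv]
    simp only [hk, Pi.add_apply, Pi.mul_apply, Pi.pow_apply, Pi.inv_apply]
    field_simp
    ring
  by_contra! hneg
  obtain ⟨n, hn⟩ := WithTop.ne_top_iff_exists.1 hneg.ne_top
  have hn0 : n < 0 := by rw [← hn] at hneg; exact_mod_cast hneg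
  have hd := meromorphicOrderAt_deriv_eq_sub_one (n := n) (by exact_mod_cast hn0.ne) hn.symm
  rw [meromorphicOrderAt_congr hev] at hd
  have hadd := meromorphicOrderAt_add (hGm.mul (hu.inv.pow 2)) hkm
  rw [hd, meromorphicOrderAt_mul hGm (hu.inv.pow 2), ← hn] at hadd
  rcases min_le_iff.1 hadd with h1 | h1
  · have : (n : WithTop ℤ) ≤ ((n - 1 : ℤ) : WithTop ℤ) :=
      le_trans (by simpa using add_le_add_right hw0.le (n : WithTop ℤ)) h1
    have := WithTop.coe_le_coe.1 this
    omega
  · have := WithTop.coe_le_coe.1 (hk0.trans h1)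
    omega

/-- The invariant region is recovered to the right of a pole: the corrected energy has the same
negative limit on both sides, and when `|u|` is large, negative energy forces `u > 0`. -/
theorem RealPI.cross (h : RealPI u v P) {c p : ℝ} (hc : 0 ≤ c) (hcp : c < p) (hp : p ∈ P)
    (hP : ∀ x ∈ Set.Ico c p, x ∉ P) (hu : 0 < u c) (hG : energyG u v c < 0) :
    ∃ d > p, d ∉ P ∧ 0 < u d ∧ energyG u v d < 0 := by
  obtain ⟨hm, ho⟩ := h.energyG_order hp
  obtain ⟨L, hL⟩ := (tendsto_nhds_iff_meromorphicOrderAt_nonneg hm).2 ho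
  have hL1 : L ≤ energyG u v c := by
    have hmono' : 𝓝[<] p ≤ 𝓝[≠] p := nhdsWithin_mono p fun y (hy : y < p) => hy.ne
    refine le_of_tendsto (hL.mono_left hmono') ?_
    filter_upwards [Ioo_mem_nhdsLT hcp] with x hx
    exact (h.invariant hc (fun y hy => hP y ⟨hy.1, hy.2.trans_lt hx.2⟩) hu hG x
      ⟨hx.1.le, le_rfl⟩).2
  have hmono : 𝓝[>] p ≤ 𝓝[≠] p := nhdsWithin_mono p fun y (hy : p < y) => hy.ne'
  have e1 := (hL.eventually (gt_mem_nhds (show L < 0 by linarith))).filter_mono hmono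
  have e2 := (h.discrete p).filter_mono hmono
  have e3 := ((h.pole p hp).eventually_gt_atTop (p + 1)).filter_mono hmono
  obtain ⟨d, ⟨hd1, hd2, hd3⟩, hd⟩ :=
    ((e1.and (e2.and e3)).and (Ioo_mem_nhdsGT (show p < p + 1 by linarith))).exists
  refine ⟨d, hd.1, hd2, ?_, hd1⟩
  -- if `u d < 0`, every term of the completed square at `d` is nonnegative
  by_contra! hneg
  rw [abs_of_nonpos hneg] at hd3
  have hlt : u d < 0 := by linarith
  have h1 := energyG_eq (v := v) hlt.ne
  have h2 : 0 ≤ 1 / (8 * u d ^ 2) := by positivity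
  have h3 : 0 ≤ (-u d) * (2 * u d ^ 2 - d) := by
    apply mul_nonneg (by linarith)
    nlinarith [hd.2]
  nlinarith [sq_nonneg (v d - 1 / (2 * u d))]

/-- A solution in the invariant region blows up in finite time. Without further poles,
`v' ≥ 4u² ≥ 1` makes `u` and `v` grow, then `v² - 2u³` is nondecreasing, so eventually `v² ≥ u³`, and
`1/√u` decreases at rate at least `1/2`, hence would become negative. -/
theorem RealPI.exists_pole (h : RealPI u v P) {c : ℝ} (hc : 0 ≤ c) (hcP : c ∉ P)
    (hu : 0 < u c) (hG : energyG u v c < 0) : ∃ p ∈ P, c < p := by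
  by_contra! hno
  have hP : ∀ x, c ≤ x → x ∉ P := fun x hx hxP => by
    have := hno x hxP
    have : x = c := le_antisymm this hx
    exact hcP (this ▸ hxP)
  have inv : ∀ x, c ≤ x → 0 < u x ∧ energyG u v x < 0 := fun x hx => by
    have := h.invariant hc (fun y hy => hP y hy.1) hu hG x ⟨hx, le_rfl⟩
    exact ⟨this.1, this.2.trans_lt hG⟩
  have bnd : ∀ x, c ≤ x → x < 2 * u x ^ 2 := fun x hx => energyG_lt_bound (inv x hx).1 (inv x hx).2
  have half : ∀ x, c ≤ x → 1 / 2 < u x := fun x hx => by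
    have h1 := energyG_pow_bound (hc.trans hx) (inv x hx).1 (inv x hx).2
    refine lt_of_pow_lt_pow_left₀ 5 (inv x hx).1.le ?_
    norm_num at h1 ⊢
    linarith
  have mono : ∀ (d : ℝ) (f f' : ℝ → ℝ), (∀ x, d ≤ x → HasDerivAt f (f' x) x) →
      (∀ x, d ≤ x → 0 ≤ f' x) → ∀ x, d ≤ x → f d ≤ f x := by
    intro d f f' hf hf' x hx
    refine monotoneOn_of_hasDerivWithinAt_nonneg (f' := f') (convex_Ici d)
      (fun y hy => (hf y hy).continuousAt.continuousWithinAt) (fun y hy => ?_) (fun y hy => ?_)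
      Set.self_mem_Ici hx hx
    · rw [interior_Ici] at hy ⊢
      exact (hf y hy.le).hasDerivWithinAt
    · rw [interior_Ici] at hy
      exact hf' y hy.le
  -- `v x - x` is nondecreasing because `v' = 6u² - x ≥ 4u² ≥ 1`
  have hv1 : ∀ x, c ≤ x → v c - c ≤ v x - x :=
    mono c (fun x => v x - x) _ (fun x hx => (h.dv x (hP x hx)).sub (hasDerivAt_id x))
      (fun x hx => by nlinarith [bnd x hx, half x hx])
  set d := max c (c + 1 - v c) with hd
  have hcd : c ≤ d := le_max_left _ _
  have hv2 : ∀ x, d ≤ x → 1 ≤ v x := fun x hx => by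
    have := hv1 x (hcd.trans hx)
    have := le_max_right c (c + 1 - v c)
    linarith
  have hu1 : ∀ x, d ≤ x → u d - d ≤ u x - x :=
    mono d (fun x => u x - x) _
      (fun x hx => (h.du x (hP x (hcd.trans hx))).sub (hasDerivAt_id x))
      (fun x hx => by linarith [hv2 x hx])
  have hphi : ∀ x, d ≤ x → v d ^ 2 - 2 * u d ^ 3 ≤ v x ^ 2 - 2 * u x ^ 3 :=
    mono d (fun x => v x ^ 2 - 2 * u x ^ 3) _
      (fun x hx => ((h.dv x (hP x (hcd.trans hx))).pow 2).sub
        (((h.du x (hP x (hcd.trans hx))).pow 3).const_mul 2))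
      (fun x hx => by
        have h1 := hv2 x hx
        have h2 := bnd x (hcd.trans hx)
        have : 0 ≤ v x * (2 * u x ^ 2 - x) := by
          apply mul_nonneg <;> linarith
        have : 0 ≤ v x * u x ^ 2 := by positivity
        norm_num
        nlinarith)
  set K := 2 * u d ^ 3 with hK
  have hKpos : 0 < K := by have := (inv d hcd).1; positivity
  set e := d + K + 1 with he
  have hsq : ∀ x, e ≤ x → u x ^ 3 ≤ v x ^ 2 := fun x hx => by
    have h1 := hphi x (by linarith)
    have h2 := hu1 x (by linarith)
    have h3 := (inv d hcd).1
    have h4 : K + 1 ≤ u x := by linarith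
    have h5 : u x ≤ u x ^ 3 := le_self_pow₀ (by linarith) (by norm_num)
    nlinarith [sq_nonneg (v d)]
  -- integrated form of `(1/√u)' ≤ -1/2`
  have hfin : ∀ x, e ≤ x → -(√(u e))⁻¹ - e / 2 ≤ -(√(u x))⁻¹ - x / 2 := by
    refine mono e (fun x => -(√(u x))⁻¹ - x / 2)
      (fun x => v x / (2 * √(u x)) / √(u x) ^ 2 - 1 / 2) (fun x hx => ?_) (fun x hx => ?_)
    · have hxc : c ≤ x := by linarith
      have h0 := (inv x hxc).1
      have h1 := ((((h.du x (hP x hxc)).sqrt h0.ne').inv (Real.sqrt_pos.2 h0).ne').neg).sub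
        ((hasDerivAt_id x).div_const 2)
      convert! h1 using 1
      ring
    · have hxc : c ≤ x := by linarith
      have h0 := (inv x hxc).1
      have hs := Real.sqrt_pos.2 h0
      have hs2 := Real.sq_sqrt h0.le
      have h2 : √(u x) ^ 3 ≤ v x := by
        refine le_of_sq_le_sq ?_ (by linarith [hv2 x (by linarith)])
        have := hsq x hx
        calc (√(u x) ^ 3) ^ 2 = (√(u x) ^ 2) ^ 3 := by ring
          _ ≤ _ := by rw [hs2]; exact this
      have : 1 / 2 ≤ v x / (2 * √(u x)) / √(u x) ^ 2 := by
        rw [div_div, div_le_div_iff₀ (by norm_num) (by positivity)]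
        nlinarith
      simpa using this
  have hue := (inv e (by linarith)).1
  have hq : 0 < (√(u e))⁻¹ := inv_pos.2 (Real.sqrt_pos.2 hue)
  have h1 := hfin (e + 2 * (√(u e))⁻¹) (by linarith)
  have h2 := (inv (e + 2 * (√(u e))⁻¹) (by linarith)).1
  have h3 : 0 < (√(u (e + 2 * (√(u e))⁻¹)))⁻¹ := inv_pos.2 (Real.sqrt_pos.2 h2)
  linarith

/-- By `exists_pole` and `cross`, every point of the invariant region has a pole to its right and
then a further point of the region beyond it; the number of poles to the right therefore cannot be
finite. -/
theorem RealPI.infinite (h : RealPI u v P) (h0 : 0 ∉ P) (hu : 0 < u 0)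
    (hG : energyG u v 0 < 0) : {x | 0 < x ∧ x ∈ P}.Infinite := by
  intro hfin
  have key : ∀ n : ℕ, ∀ c, 0 ≤ c → c ∉ P → 0 < u c → energyG u v c < 0 →
      ({x | 0 < x ∧ x ∈ P} ∩ Set.Ioi c).ncard = n → False := by
    intro n
    induction n using Nat.strong_induction_on with
    | _ n ih =>
      intro c hc hcP huc hGc hn
      have hf : ({x | 0 < x ∧ x ∈ P} ∩ Set.Ioi c).Finite := hfin.subset Set.inter_subset_left
      obtain ⟨p', hp', hcp'⟩ := h.exists_pole hc hcP huc hGc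
      obtain ⟨p, ⟨⟨hp0, hpP⟩, hcp⟩, hmin⟩ :=
        Set.exists_min_image _ id hf ⟨p', ⟨hc.trans_lt hcp', hp'⟩, hcp'⟩
      obtain ⟨d, hpd, hdP, hud, hGd⟩ := h.cross hc hcp hpP (fun x hx hxP => by
        rcases hx.1.eq_or_lt with rfl | hlt
        · exact hcP hxP
        · exact absurd (hmin x ⟨⟨hc.trans_lt hlt, hxP⟩, hlt⟩) (not_le.2 hx.2)) huc hGc
      refine ih _ ?_ d (hp0.le.trans hpd.le) hdP hud hGd rfl
      rw [← hn]
      refine Set.ncard_lt_ncard ⟨fun x hx => ⟨hx.1, hcp.trans (hpd.trans hx.2)⟩, fun hsub => ?_⟩ hf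
      exact absurd (hsub ⟨⟨hp0, hpP⟩, hcp⟩).2 (not_lt.2 hpd.le)
  exact key _ 0 le_rfl h0 hu hG rfl

/-! ### From the complex function to a real solution -/

theorem MeromorphicAt.clm_comp {L : ℂ →L[ℝ] ℝ} {f : ℝ → ℂ} {x : ℝ} (hf : MeromorphicAt f x) :
    MeromorphicAt (fun t => L (f t)) x := by
  obtain ⟨n, hn⟩ := hf
  refine ⟨n, ((L.analyticAt _).comp hn).congr (Eventually.of_forall fun t => ?_)⟩
  exact L.map_smul ((t - x) ^ n) (f t)

theorem HasDerivAt.clm_comp_neg {L : ℂ →L[ℝ] ℝ} {f : ℂ → ℂ} {f' : ℂ} {x : ℝ}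
    (hf : HasDerivAt f f' (-x : ℂ)) :
    HasDerivAt (fun t : ℝ => L (f (-t : ℂ))) (-(L f')) x := by
  have h1 : HasDerivAt (fun z : ℂ => f (-z)) (-f') (x : ℂ) := by
    convert! hf.comp (x : ℂ) (hasDerivAt_neg (x : ℂ)) using 1
    simp
  have h2 := L.hasFDerivAt.comp_hasDerivAt x h1.comp_ofReal
  convert! h2 using 1
  simp

/-- A meromorphic solution of PI in normal form (so that it is analytic wherever it is not a pole),
analytic at `0` with real value and real derivative there. -/
structure NFPI (Y : ℂ → ℂ) : Prop where
  nf : MeromorphicNFOn Y Set.univ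
  eqn : ∀ z, AnalyticAt ℂ Y z → deriv (deriv Y) z = 6 * Y z ^ 2 + z
  anal : AnalyticAt ℂ Y 0
  re0 : (Y 0).im = 0
  re1 : (deriv Y 0).im = 0

theorem NFPI.mero {Y : ℂ → ℂ} (h : NFPI Y) (L : ℂ →L[ℝ] ℝ) (x : ℝ) :
    MeromorphicAt (fun t : ℝ => L (Y (-t : ℂ))) x ∧
    MeromorphicAt (fun t : ℝ => L (deriv Y (-t : ℂ))) x := by
  have hm := (h.nf (Set.mem_univ (-x : ℂ))).meromorphicAt
  have hg : AnalyticAt ℝ (fun t : ℝ => (-t : ℂ)) x :=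
    (Complex.ofRealCLM.analyticAt x).neg
  exact ⟨(MeromorphicAt.comp_analyticAt (g := fun t : ℝ => (-t : ℂ)) hm hg).clm_comp,
    (MeromorphicAt.comp_analyticAt (g := fun t : ℝ => (-t : ℂ)) hm.deriv hg).clm_comp⟩

theorem tendsto_neg_ofReal (p : ℝ) :
    Tendsto (fun t : ℝ => (-t : ℂ)) (𝓝[≠] p) (𝓝[≠] (-p : ℂ)) := by
  refine tendsto_nhdsWithin_of_tendsto_nhds_of_eventually_within _ ?_ ?_
  · exact (Complex.continuous_ofReal.neg.tendsto p).mono_left nhdsWithin_le_nhds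
  · filter_upwards [self_mem_nhdsWithin] with t ht h
    exact ht (by simpa using h)

/-- The solution is real on the real axis. The imaginary part `m` of `t ↦ Y (-t)` is a real
meromorphic function with `m'' = 12 (Re Y) m` and `m 0 = m' 0 = 0`. If it had finite order `n` at `0`,
then `n ≥ 2` and `m''` would have order `n - 2`, against order at least `n` on the right. So `m`
vanishes near `0`, and by the identity theorem near every real point, poles included. -/
theorem NFPI.im_eventually_zero {Y : ℂ → ℂ} (h : NFPI Y) (p : ℝ) :
    ∀ᶠ t : ℝ in 𝓝[≠] p, (Y (-t : ℂ)).im = 0 := by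
  set m : ℝ → ℝ := fun t => Complex.imCLM (Y (-t : ℂ)) with hm
  set m1 : ℝ → ℝ := fun t => -Complex.imCLM (deriv Y (-t : ℂ)) with hm1
  have hmer : ∀ x, MeromorphicAt m x := fun x => (h.mero Complex.imCLM x).1
  have hA : ∀ᶠ t : ℝ in 𝓝 0, AnalyticAt ℂ Y (-t : ℂ) := by
    have hc : Tendsto (fun t : ℝ => (-t : ℂ)) (𝓝 0) (𝓝 0) := by
      have := Complex.continuous_ofReal.neg.tendsto (0 : ℝ)
      rwa [Pi.neg_apply, Complex.ofReal_zero, neg_zero] at this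
    exact hc.eventually h.anal.eventually_analyticAt
  have hd : ∀ᶠ t : ℝ in 𝓝 0, HasDerivAt m (m1 t) t := by
    filter_upwards [hA] with t ht
    exact ht.differentiableAt.hasDerivAt.clm_comp_neg
  have hd1 : ∀ᶠ t : ℝ in 𝓝 0, HasDerivAt m1 (12 * (Y (-t : ℂ)).re * m t) t := by
    filter_upwards [hA] with t ht
    have h1 := (ht.deriv.differentiableAt.hasDerivAt.clm_comp_neg (L := Complex.imCLM)).neg
    rw [h.eqn _ ht, neg_neg] at h1
    convert! h1 using 1
    simp [hm, pow_two]
    ring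
  have horder : meromorphicOrderAt m 0 = ⊤ := by
    by_contra hne
    have ev1 : deriv m =ᶠ[𝓝 0] m1 := hd.mono fun t ht => ht.deriv
    have ev2 : deriv (deriv m) =ᶠ[𝓝[≠] 0] (fun t : ℝ => 12 * (Y (-t : ℂ)).re) * m := by
      filter_upwards [ev1.eventuallyEq_nhds.filter_mono nhdsWithin_le_nhds,
        hd1.filter_mono nhdsWithin_le_nhds] with t h1 h2
      rw [h1.deriv_eq, h2.deriv]; rfl
    have hpos : ∀ f : ℝ → ℝ, MeromorphicAt f 0 → ContinuousAt f 0 → f 0 = 0 →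
        0 < meromorphicOrderAt f 0 := fun f hf hc h0 =>
      (tendsto_zero_iff_meromorphicOrderAt_pos hf).1
        (by simpa [h0] using hc.tendsto.mono_left (nhdsWithin_le_nhds (s := {0}ᶜ)))
    have p1 := hpos m (hmer 0) hd.self_of_nhds.continuousAt (by simp [hm, h.re0])
    have p2 := hpos (deriv m) (hmer 0).deriv
      (hd1.self_of_nhds.continuousAt.congr ev1.symm)
      (by rw [ev1.eq_of_nhds]; simp [hm1, h.re1])
    obtain ⟨n, hn⟩ := WithTop.ne_top_iff_exists.1 hne
    have hn0 : 0 < n := by rw [← hn] at p1; exact_mod_cast p1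
    have o1 := meromorphicOrderAt_deriv_eq_sub_one (n := n) (by exact_mod_cast hn0.ne') hn.symm
    have hn1 : 0 < n - 1 := by rw [o1] at p2; exact_mod_cast p2
    have o2 := meromorphicOrderAt_deriv_eq_sub_one (n := n - 1) (by exact_mod_cast hn1.ne') o1
    have hk := (h.mero Complex.reCLM 0).1
    have hkm : MeromorphicAt (fun t : ℝ => 12 * (Y (-t : ℂ)).re) 0 :=
      (MeromorphicAt.const (12 : ℝ) 0).mul hk
    have hkt : 0 ≤ meromorphicOrderAt (fun t : ℝ => 12 * (Y (-t : ℂ)).re) 0 := by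
      refine (tendsto_nhds_iff_meromorphicOrderAt_nonneg hkm).1 ⟨12 * (Y (-(0 : ℝ) : ℂ)).re, ?_⟩
      have := (hA.self_of_nhds.differentiableAt.hasDerivAt.clm_comp_neg
        (L := Complex.reCLM)).continuousAt.const_mul 12
      exact this.tendsto.mono_left nhdsWithin_le_nhds
    rw [meromorphicOrderAt_congr ev2, meromorphicOrderAt_mul hkm (hmer 0), ← hn] at o2
    have : (n : WithTop ℤ) ≤ ((n - 1 - 1 : ℤ) : WithTop ℤ) := by
      rw [← o2]; simpa using add_le_add_left hkt (n : WithTop ℤ)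
    have := WithTop.coe_le_coe.1 this
    omega
  have htop : meromorphicOrderAt m p = ⊤ := by
    by_contra hne
    have hall := (Meromorphic.exists_meromorphicOrderAt_ne_top_iff_forall
      (fun x => hmer x)).1 ⟨p, hne⟩
    exact hall 0 horder
  exact meromorphicOrderAt_eq_top_iff.1 htop

theorem NFPI.im_eq_zero {Y : ℂ → ℂ} (h : NFPI Y) {x : ℝ} (hx : AnalyticAt ℂ Y (-x : ℂ)) :
    (Y (-x : ℂ)).im = 0 ∧ (deriv Y (-x : ℂ)).im = 0 := by
  have hd := hx.differentiableAt.hasDerivAt.clm_comp_neg (L := Complex.imCLM)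
  have h0 : (fun t : ℝ => Complex.imCLM (Y (-t : ℂ))) =ᶠ[𝓝 x] fun _ => 0 :=
    (hd.continuousAt.eventuallyEq_nhds_iff_eventuallyEq_nhdsNE continuousAt_const).1
      (h.im_eventually_zero x)
  refine ⟨h0.eq_of_nhds, ?_⟩
  have := hd.unique ((hasDerivAt_const x (0 : ℝ)).congr_of_eventuallyEq h0)
  simpa using this

theorem NFPI.tendsto_pole {Y : ℂ → ℂ} (h : NFPI Y) {z : ℂ} (hz : ¬ AnalyticAt ℂ Y z) :
    Tendsto (fun w => ‖Y w‖) (𝓝[≠] z) atTop := by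
  rw [← (h.nf (Set.mem_univ z)).meromorphicOrderAt_nonneg_iff_analyticAt, not_le] at hz
  exact tendsto_norm_atTop_iff_cobounded.2 (tendsto_cobounded_of_meromorphicOrderAt_neg hz)

/-- The reflection `x = -t` turns PI on the negative axis into `u'' = 6u² - x` on the positive
axis. -/
theorem NFPI.realPI {Y : ℂ → ℂ} (h : NFPI Y) :
    RealPI (fun t : ℝ => (Y (-t : ℂ)).re) (fun t : ℝ => -(deriv Y (-t : ℂ)).re)
      {x : ℝ | ¬ AnalyticAt ℂ Y (-x : ℂ)} where
  du x hx := (not_not.1 hx).differentiableAt.hasDerivAt.clm_comp_neg (L := Complex.reCLM)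
  dv x hx := by
    have hx := not_not.1 hx
    have h1 := (hx.deriv.differentiableAt.hasDerivAt.clm_comp_neg (L := Complex.reCLM)).neg
    rw [h.eqn _ hx] at h1
    convert! h1 using 1
    simp [pow_two, (h.im_eq_zero hx).1]
    ring
  mu x := (h.mero Complex.reCLM x).1
  mv x := (h.mero Complex.reCLM x).2.neg
  discrete p := by
    filter_upwards [(tendsto_neg_ofReal p).eventually
      (h.nf (Set.mem_univ (-p : ℂ))).meromorphicAt.eventually_analyticAt] with t ht
    exact not_not.2 ht
  pole p hp := by
    refine ((h.tendsto_pole hp).comp (tendsto_neg_ofReal p)).congr' ?_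
    filter_upwards [h.im_eventually_zero p] with t ht
    rw [Function.comp_apply, ← Complex.abs_re_eq_norm.2 ht]

/-- Passing to normal form only changes `y` at removable singularities; the equation extends to
those by continuity. -/
theorem IsGlobalPI.nfPI {y : ℂ → ℂ} {a b : ℝ} (h : IsGlobalPI y a b) :
    NFPI (toMeromorphicNFOn y Set.univ) ∧
    toMeromorphicNFOn y Set.univ =ᶠ[𝓝 0] y := by
  set Y := toMeromorphicNFOn y Set.univ with hY
  have hnf : MeromorphicNFOn Y Set.univ := meromorphicNFOn_toMeromorphicNFOn y Set.univ
  have heq : ∀ z, Y =ᶠ[𝓝[≠] z] y := fun z =>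
    h.mero.toMeromorphicNFOn_eq_self_on_nhdsNE (Set.mem_univ z)
  have h0 : Y =ᶠ[𝓝 0] y :=
    ((hnf (Set.mem_univ 0)).eventuallyEq_nhdsNE_iff_eventuallyEq_nhds
      h.anal.meromorphicNFAt).1 (heq 0)
  refine ⟨⟨hnf, fun z hz => ?_, h.anal.congr h0.symm, ?_, ?_⟩, h0⟩
  · have hev : deriv (deriv Y) =ᶠ[𝓝[≠] z] fun w => 6 * Y w ^ 2 + w := by
      filter_upwards [hz.eventually_analyticAt.filter_mono nhdsWithin_le_nhds,
        eventually_eventually_nhdsWithin.2 (heq z), self_mem_nhdsWithin] with w hw hyw hwz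
      have hyw' : Y =ᶠ[𝓝 w] y := by
        rwa [nhdsWithin_eq_nhds.2 (isOpen_compl_singleton.mem_nhds hwz)] at hyw
      rw [hyw'.deriv.deriv_eq, hyw'.eq_of_nhds]
      exact h.eqn w (hw.congr hyw')
    have hc : ContinuousAt (fun w => 6 * Y w ^ 2 + w) z :=
      ((hz.continuousAt.pow 2).const_mul 6).add continuousAt_id
    exact ((hz.deriv.deriv.continuousAt.eventuallyEq_nhds_iff_eventuallyEq_nhdsNE hc).1
      hev).eq_of_nhds
  · rw [h0.eq_of_nhds, h.init, Complex.ofReal_im]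
  · rw [h0.deriv_eq, h.slope, Complex.ofReal_im]

theorem stmt3 :
    ∃ M₅ > (0 : ℝ), ∀ a : ℝ, M₅ < a →
      ∀ y : ℂ → ℂ,
        IsGlobalPI y (a : ℂ) ((-(2 * a ^ ((3 : ℝ) / 2)) : ℝ) : ℂ) → TypeC y := by
  refine ⟨1, one_pos, fun a ha y hy => ?_⟩
  obtain ⟨hN, h0⟩ := hy.nfPI
  set Y := toMeromorphicNFOn y Set.univ with hY
  have ha0 : 0 < a := by linarith
  set b := a ^ ((3 : ℝ) / 2) with hb
  have hb2 : b ^ 2 = a ^ 3 := by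
    rw [hb, ← Real.rpow_natCast, ← Real.rpow_mul ha0.le, ← Real.rpow_natCast]; norm_num
  have hbpos : 0 < b := Real.rpow_pos_of_pos ha0 _
  have hab : a ≤ b := by
    refine le_of_sq_le_sq ?_ hbpos.le
    rw [hb2]; nlinarith [sq_nonneg a]
  -- the corrected energy at `0` is `-b / a + 1 / (4 * a ^ 2)`, negative for `a > 1`
  have hinf := hN.realPI.infinite (by simpa using hN.anal)
    (by simpa [h0.eq_of_nhds, hy.init] using ha0) (by
      simp only [energyG, Complex.ofReal_zero, neg_zero, h0.eq_of_nhds, h0.deriv_eq, hy.init,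
        hy.slope, Complex.ofReal_re, zero_mul, neg_neg]
      have e1 : (2 * b) ^ 2 / 2 - 2 * a ^ 3 = 0 := by rw [mul_pow, hb2]; ring
      have e2 : 1 ≤ 2 * b / (2 * a) := by rw [le_div_iff₀ (by positivity)]; linarith
      have e3 : 1 / (4 * a ^ 2) < 1 := by rw [div_lt_one (by positivity)]; nlinarith
      linarith)
  refine (hinf.image neg_injective.injOn).mono ?_
  rintro _ ⟨x, ⟨hx, hxP⟩, rfl⟩
  refine ⟨by linarith, ?_⟩
  rw [IsPolePt, Complex.ofReal_neg]
  refine (hN.tendsto_pole hxP).congr' ?_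
  filter_upwards [hy.mero.toMeromorphicNFOn_eq_self_on_nhdsNE (Set.mem_univ (-x : ℂ))] with w hw
  rw [hY, hw]

end
end
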